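/- In the r-state i.i.d. model with m(n) = ⌈c·n^{2/(r−1)+α}⌉ and l(n) = ⌈c'·n^{2/(r−1)+α}⌉ for some constants c > 0, c' > 0 and α > 0, and with Δ'_n = n^{−(1/(r−1)+α/4)}, the empirical frequency vectors satisfy P(⋃_{u=2}^n {max_{1 ≤ i ≤ r−1} |X̄_u(i) − W̄_1(i)| ≤ Δ'_n}) → 0 as n → ∞, where X̄_u(i) = |{k ≤ m : X_u(k) = i}|/m and W̄_u(i) = |{k ≤ l : W_u(k) = i}|/l. -/

import Mathlib

open MeasureTheory ProbabilityTheory Filter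
open scoped ENNReal NNReal

/-- Discrete measure on `Fin r` assigning mass `q i` to the point `i`. -/
noncomputable def catMeasure (r : ℕ) (q : Fin r → ℝ) : Measure (Fin r) :=
  ∑ i : Fin r, ENNReal.ofReal (q i) • Measure.dirac i

/-- Extend a parameter vector `(p 1, …, p (r-1))` (probabilities of the values `1, …, r-1`)
to a full probability vector on `{0, 1, …, r-1}`, value `0` receiving the remaining mass. -/
noncomputable def fullProb (r : ℕ) (p : Fin (r - 1) → ℝ) : Fin r → ℝ := fun i =>
  if h : (i : ℕ) = 0 then 1 - ∑ j, p j
  else p ⟨(i : ℕ) - 1, by have := i.isLt; omega⟩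

/-- The open region `{x ∈ (0,1)^d : xᵢ > 0, x₁ + ⋯ + x_d < 1}` of admissible parameters. -/
def simplexRegion (d : ℕ) : Set (Fin d → ℝ) :=
  {x | (∀ i, 0 < x i) ∧ ∑ i, x i < 1}

/-- Joint law of (parameters, actual traces, training traces) in the `r`-state i.i.d. model:
the parameter vectors `p u` are i.i.d. with law `μP`, and conditionally on the parameters the
`n` actual traces (of length `m`) and training traces (of length `l`) consist of i.i.d.
samples from `{0, …, r-1}` where value `i ≥ 1` has probability `p u i` and value `0` the
remaining probability; all traces are mutually independent. -/
noncomputable def rStateLaw (n m l r : ℕ) (μP : Measure (Fin (r - 1) → ℝ)) :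
    Measure ((Fin n → Fin (r - 1) → ℝ) × (Fin n → Fin m → Fin r) × (Fin n → Fin l → Fin r)) :=
  (Measure.pi fun _ : Fin n => μP).bind fun p =>
    (Measure.dirac p).prod
      ((Measure.pi fun u : Fin n =>
          Measure.pi fun _ : Fin m => catMeasure r (fullProb r (p u))).prod
        (Measure.pi fun u : Fin n =>
          Measure.pi fun _ : Fin l => catMeasure r (fullProb r (p u))))

/-- Empirical frequency of the value `i` in a sample `x` of size `m`. -/
noncomputable def empFreq {m r : ℕ} (x : Fin m → Fin r) (i : Fin r) : ℝ :=
  ((Finset.univ.filter fun k => x k = i).card : ℝ) / m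

lemma catMeasure_isProb {r : ℕ} {q : Fin r → ℝ} (h0 : ∀ i, 0 ≤ q i) (h1 : ∑ i, q i = 1) :
    IsProbabilityMeasure (catMeasure r q) := by
  constructor
  simp only [catMeasure, Measure.coe_finsetSum, Finset.sum_apply, Measure.smul_apply,
    measure_univ, smul_eq_mul, mul_one]
  rw [← ENNReal.ofReal_sum_of_nonneg (fun i _ => h0 i), h1, ENNReal.ofReal_one]

lemma catMeasure_singleton {r : ℕ} (q : Fin r → ℝ) (i : Fin r) :
    catMeasure r q {i} = ENNReal.ofReal (q i) := by
  simp only [catMeasure, Measure.coe_finsetSum, Finset.sum_apply, Measure.smul_apply,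
    smul_eq_mul]
  rw [Finset.sum_eq_single i]
  · simp
  · intro b _ hb
    simp [hb]
  · simp

lemma empFreq_hoeffding {m r : ℕ} {q : Fin r → ℝ} (h0 : ∀ i, 0 ≤ q i) (h1 : ∑ i, q i = 1)
    (i : Fin r) {ε : ℝ} (hε : 0 < ε) :
    (Measure.pi fun _ : Fin m => catMeasure r q) {x | ε < |empFreq x i - q i|}
      ≤ ENNReal.ofReal (2 * Real.exp (-2 * m * ε ^ 2)) := by
  have := catMeasure_isProb h0 h1
  rcases Nat.eq_zero_or_pos m with hm | hm
  · subst hm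
    refine prob_le_one.trans ?_
    rw [← ENNReal.ofReal_one]
    apply ENNReal.ofReal_le_ofReal
    simp
  have hmR : (0 : ℝ) < m := by exact_mod_cast hm
  set ν := catMeasure r q with hν
  set g : Fin r → ℝ := Set.indicator {i} 1 with hg
  have hgI : ∫ y, g y ∂ν = q i := by
    rw [hg, integral_indicator_one (MeasurableSet.singleton i), measureReal_def,
      catMeasure_singleton, ENNReal.toReal_ofReal (h0 i)]
  have hsub : HasSubgaussianMGF (fun y => g y - q i) ((‖(1:ℝ) - 0‖₊ / 2) ^ 2) ν := by
    have h := hasSubgaussianMGF_of_mem_Icc (μ := ν) (X := g) (a := 0) (b := 1)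
      (measurable_of_finite g).aemeasurable (Eventually.of_forall fun y => by
        by_cases hy : y = i <;> simp [hg, hy])
    rwa [hgI] at h
  have hgm : Measurable (fun y => g y - q i) := measurable_of_finite _
  have key : ∀ G : Fin r → ℝ, HasSubgaussianMGF G ((‖(1:ℝ) - 0‖₊ / 2) ^ 2) ν →
      (Measure.pi fun _ : Fin m => ν).real {x | m * ε ≤ ∑ k : Fin m, G (x k)} ≤
        Real.exp (-2 * m * ε ^ 2) := by
    intro G hG
    have hind : iIndepFun (fun (k : Fin m) (x : Fin m → Fin r) => G (x k))
        (Measure.pi fun _ : Fin m => ν) :=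
      iIndepFun_pi (X := fun _ => G) (fun _ => (measurable_of_finite G).aemeasurable)
    have hs : ∀ k ∈ (Finset.univ : Finset (Fin m)),
        HasSubgaussianMGF (fun x : Fin m → Fin r => G (x k)) ((‖(1:ℝ) - 0‖₊ / 2) ^ 2)
          (Measure.pi fun _ : Fin m => ν) := by
      intro k _
      have hmp := measurePreserving_eval (fun _ : Fin m => ν) k
      exact HasSubgaussianMGF.of_map (X := G) (Y := Function.eval k) hmp.measurable.aemeasurable
        (by rw [hmp.map_eq]; exact hG)
    refine (HasSubgaussianMGF.measure_sum_ge_le_of_iIndepFun hind hs (by positivity)).trans ?_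
    apply Real.exp_le_exp.2
    apply le_of_eq
    simp
    field_simp
  have k1 := key _ hsub
  have k2 := key _ hsub.neg
  have hsum : ∀ x : Fin m → Fin r, ∑ k : Fin m, (g (x k) - q i) = m * (empFreq x i - q i) := by
    intro x
    have : ∑ k : Fin m, g (x k) = ((Finset.univ.filter fun k => x k = i).card : ℝ) := by
      rw [Finset.card_filter]
      push_cast
      refine Finset.sum_congr rfl fun k _ => ?_
      rw [hg, Set.indicator_apply]
      simp
    rw [Finset.sum_sub_distrib, this, empFreq]
    simp
    field_simp
  have hsub2 : {x : Fin m → Fin r | ε < |empFreq x i - q i|} ⊆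
      {x | m * ε ≤ ∑ k : Fin m, (g (x k) - q i)} ∪
      {x | m * ε ≤ ∑ k : Fin m, (-(fun y => g y - q i)) (x k)} := by
    intro x hx
    simp only [Set.mem_ofPred_eq, Set.mem_union, Pi.neg_apply, Finset.sum_neg_distrib, hsum] at hx ⊢
    rcases lt_abs.1 hx with h | h
    · left; gcongr
    · right; rw [← mul_neg]; gcongr
  have hfin : (Measure.pi fun _ : Fin m => ν).real {x | ε < |empFreq x i - q i|}
      ≤ 2 * Real.exp (-2 * m * ε ^ 2) := by
    refine (measureReal_mono hsub2).trans ((measureReal_union_le _ _).trans ?_)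
    linarith
  rw [measureReal_def] at hfin
  exact (ENNReal.le_ofReal_iff_toReal_le (measure_ne_top _ _) (by positivity)).2 hfin

lemma fullProb_succ {r : ℕ} (p : Fin (r - 1) → ℝ) (j : Fin (r - 1)) :
    fullProb r p ⟨j + 1, by omega⟩ = p j := by
  simp [fullProb]

lemma fullProb_nonneg {r : ℕ} {p : Fin (r - 1) → ℝ} (hp : p ∈ simplexRegion (r - 1)) (i : Fin r) :
    0 ≤ fullProb r p i := by
  unfold fullProb
  split_ifs
  · linarith [hp.2]
  · exact (hp.1 _).le

lemma fullProb_sum {r : ℕ} (hr : 2 ≤ r) (p : Fin (r - 1) → ℝ) : ∑ i, fullProb r p i = 1 := by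
  obtain ⟨d, rfl⟩ : ∃ d, r = d + 1 := ⟨r - 1, by omega⟩
  rw [Fin.sum_univ_succ]
  simp [fullProb]

lemma cond_bound {n m l r : ℕ} (hr : 2 ≤ r) (p : Fin n → Fin (r - 1) → ℝ)
    (hp : ∀ u, p u ∈ simplexRegion (r - 1)) {ε : ℝ} (hε : 0 < ε) (u v : Fin n) :
    ((Measure.pi fun u : Fin n =>
          Measure.pi fun _ : Fin m => catMeasure r (fullProb r (p u))).prod
        (Measure.pi fun u : Fin n =>
          Measure.pi fun _ : Fin l => catMeasure r (fullProb r (p u))))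
      {xw | ∀ i : Fin r, (i : ℕ) ≠ 0 → |empFreq (xw.1 u) i - empFreq (xw.2 v) i| ≤ ε}
    ≤ ENNReal.ofReal (r * (2 * Real.exp (-2 * m * ε ^ 2)) + r * (2 * Real.exp (-2 * l * ε ^ 2)))
      + {p : Fin n → Fin (r - 1) → ℝ | p u ∈ Metric.closedBall (p v) (3 * ε)}.indicator 1 p := by
  have hprob : ∀ u, IsProbabilityMeasure (catMeasure r (fullProb r (p u))) := fun u =>
    catMeasure_isProb (fullProb_nonneg (hp u)) (fullProb_sum hr _)
  by_cases hin : p u ∈ Metric.closedBall (p v) (3 * ε)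
  · refine prob_le_one.trans ?_
    rw [Set.indicator_of_mem (by exact hin)]
    simp
  rw [Set.indicator_of_notMem (by exact hin), add_zero]
  set A := Measure.pi fun u : Fin n =>
          Measure.pi fun _ : Fin m => catMeasure r (fullProb r (p u))
  set B := Measure.pi fun u : Fin n =>
          Measure.pi fun _ : Fin l => catMeasure r (fullProb r (p u))
  have hA : ∀ i : Fin r, (A.prod B) {xw | ε < |empFreq (xw.1 u) i - fullProb r (p u) i|} ≤
      ENNReal.ofReal (2 * Real.exp (-2 * m * ε ^ 2)) := by
    intro i
    have h1 : MeasurePreserving (Prod.fst : _ × _ → _) (A.prod B) A := measurePreserving_fst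
    have h2 := (measurePreserving_eval (fun u : Fin n =>
          Measure.pi fun _ : Fin m => catMeasure r (fullProb r (p u))) u).comp h1
    have h3 := h2.measure_preimage (s := {x | ε < |empFreq x i - fullProb r (p u) i|})
      (Set.toFinite _).measurableSet.nullMeasurableSet
    exact h3.le.trans (empFreq_hoeffding (fullProb_nonneg (hp u)) (fullProb_sum hr _) i hε)
  have hB : ∀ i : Fin r, (A.prod B) {xw | ε < |empFreq (xw.2 v) i - fullProb r (p v) i|} ≤
      ENNReal.ofReal (2 * Real.exp (-2 * l * ε ^ 2)) := by
    intro i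
    have h1 : MeasurePreserving (Prod.snd : _ × _ → _) (A.prod B) B := measurePreserving_snd
    have h2 := (measurePreserving_eval (fun u : Fin n =>
          Measure.pi fun _ : Fin l => catMeasure r (fullProb r (p u))) v).comp h1
    have h3 := h2.measure_preimage (s := {x | ε < |empFreq x i - fullProb r (p v) i|})
      (Set.toFinite _).measurableSet.nullMeasurableSet
    exact h3.le.trans (empFreq_hoeffding (fullProb_nonneg (hp v)) (fullProb_sum hr _) i hε)
  have hsubs : {xw : (Fin n → Fin m → Fin r) × (Fin n → Fin l → Fin r) |
        ∀ i : Fin r, (i : ℕ) ≠ 0 → |empFreq (xw.1 u) i - empFreq (xw.2 v) i| ≤ ε} ⊆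
      (⋃ i : Fin r, {xw | ε < |empFreq (xw.1 u) i - fullProb r (p u) i|}) ∪
      (⋃ i : Fin r, {xw | ε < |empFreq (xw.2 v) i - fullProb r (p v) i|}) := by
    intro xw hxw
    by_contra hcon
    simp only [Set.mem_union, Set.mem_iUnion, Set.mem_ofPred_eq, not_or, not_exists, not_lt]
      at hcon hxw
    apply hin
    rw [Metric.mem_closedBall, dist_pi_le_iff (by positivity)]
    intro j
    have a1 := hcon.1 ⟨j + 1, by omega⟩
    have a2 := hcon.2 ⟨j + 1, by omega⟩
    have a3 := hxw ⟨j + 1, by omega⟩ (by simp)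
    rw [fullProb_succ] at a1 a2
    rw [Real.dist_eq]
    rw [abs_le] at *
    constructor <;> linarith [a1.1, a1.2, a2.1, a2.2, a3.1, a3.2]
  refine (measure_mono hsubs).trans ((measure_union_le _ _).trans ?_)
  rw [ENNReal.ofReal_add (by positivity) (by positivity)]
  gcongr
  · refine (measure_iUnion_fintype_le _ _).trans ((Finset.sum_le_sum fun i _ => hA i).trans ?_)
    rw [ENNReal.ofReal_mul (p := (r : ℝ)) (by positivity)]
    simp
  · refine (measure_iUnion_fintype_le _ _).trans ((Finset.sum_le_sum fun i _ => hB i).trans ?_)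
    rw [ENNReal.ofReal_mul (p := (r : ℝ)) (by positivity)]
    simp

lemma pi_close_bound {n d : ℕ} (μP : Measure (Fin d → ℝ)) [IsProbabilityMeasure μP] (K : ℝ≥0∞)
    (ρ : ℝ) (hK : ∀ x, μP (Metric.closedBall x ρ) ≤ K) (u v : Fin n) (huv : v ≠ u) :
    (Measure.pi fun _ : Fin n => μP) {p | p u ∈ Metric.closedBall (p v) ρ} ≤ K := by
  have hind := (iIndepFun_pi (μ := fun _ : Fin n => μP) (X := fun _ x => x)
    (fun _ => aemeasurable_id')).indepFun huv
  rw [indepFun_iff_map_prod_eq_prod_map_map (measurable_pi_apply v).aemeasurable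
    (measurable_pi_apply u).aemeasurable] at hind
  have e : ∀ w : Fin n, Measure.map (fun p : Fin n → Fin d → ℝ => p w)
      (Measure.pi fun _ : Fin n => μP) = μP := fun w =>
    (measurePreserving_eval (fun _ : Fin n => μP) w).map_eq
  rw [e, e] at hind
  have hS : MeasurableSet {z : (Fin d → ℝ) × (Fin d → ℝ) | z.2 ∈ Metric.closedBall z.1 ρ} := by
    simp only [Metric.mem_closedBall]
    exact measurableSet_le (by fun_prop) (by fun_prop)
  have h2 : (Measure.pi fun _ : Fin n => μP) {p | p u ∈ Metric.closedBall (p v) ρ} =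
      (μP.prod μP) {z | z.2 ∈ Metric.closedBall z.1 ρ} := by
    rw [← hind, Measure.map_apply (by fun_prop) hS]
    rfl
  rw [h2, Measure.prod_apply hS]
  calc _ ≤ ∫⁻ _, K ∂μP := lintegral_mono fun x => hK x
    _ = K := by simp

lemma law_bound {n m l r : ℕ} (hr : 2 ≤ r) (hn : 0 < n)
    (μP : Measure (Fin (r - 1) → ℝ)) [IsProbabilityMeasure μP]
    (hsupp : ∀ᵐ x ∂μP, x ∈ simplexRegion (r - 1)) {ε : ℝ} (hε : 0 < ε) (K : ℝ)
    (hK : ∀ x, μP (Metric.closedBall x (3 * ε)) ≤ ENNReal.ofReal K) (hK0 : 0 ≤ K) :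
    rStateLaw n m l r μP {z | ∃ u : Fin n, u ≠ ⟨0, hn⟩ ∧
            ∀ i : Fin r, (i : ℕ) ≠ 0 →
              |empFreq (z.2.1 u) i - empFreq (z.2.2 ⟨0, hn⟩) i| ≤ ε} ≤
    ENNReal.ofReal (n * (r * (2 * Real.exp (-2 * m * ε ^ 2)) +
      r * (2 * Real.exp (-2 * l * ε ^ 2)) + K)) := by
  set D := r * (2 * Real.exp (-2 * m * ε ^ 2)) + r * (2 * Real.exp (-2 * l * ε ^ 2)) with hD
  have hD0 : 0 ≤ D := by positivity
  set S : Fin n → Set ((Fin n → Fin m → Fin r) × (Fin n → Fin l → Fin r)) := fun u =>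
    {xw | ∀ i : Fin r, (i : ℕ) ≠ 0 → |empFreq (xw.1 u) i - empFreq (xw.2 ⟨0, hn⟩) i| ≤ ε} with hS
  have hSm : ∀ u, MeasurableSet (S u) := fun u => (Set.toFinite _).measurableSet
  have hsub : {z : (Fin n → Fin (r - 1) → ℝ) × (Fin n → Fin m → Fin r) × (Fin n → Fin l → Fin r) |
      ∃ u : Fin n, u ≠ ⟨0, hn⟩ ∧
            ∀ i : Fin r, (i : ℕ) ≠ 0 →
              |empFreq (z.2.1 u) i - empFreq (z.2.2 ⟨0, hn⟩) i| ≤ ε} ⊆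
      ⋃ u ∈ (Finset.univ.filter fun u : Fin n => u ≠ ⟨0, hn⟩), Set.univ ×ˢ S u := by
    rintro z ⟨u, hu, h⟩
    simp only [Set.mem_iUnion]
    exact ⟨u, by simpa using hu, Set.mem_univ _, h⟩
  have hone : ∀ u : Fin n, u ≠ ⟨0, hn⟩ →
      rStateLaw n m l r μP (Set.univ ×ˢ S u) ≤ ENNReal.ofReal (D + K) := by
    intro u hu
    have hae : ∀ᵐ p ∂(Measure.pi fun _ : Fin n => μP), ∀ w, p w ∈ simplexRegion (r - 1) := by
      rw [ae_all_iff]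
      intro w
      exact (measurePreserving_eval (fun _ : Fin n => μP) w).quasiMeasurePreserving.ae hsupp
    unfold rStateLaw
    refine (Measure.bind_apply_le _ (MeasurableSet.univ.prod (hSm u))).trans ?_
    calc _ ≤ ∫⁻ p, (ENNReal.ofReal D +
          {p : Fin n → Fin (r - 1) → ℝ |
            p u ∈ Metric.closedBall (p ⟨0, hn⟩) (3 * ε)}.indicator 1 p)
            ∂(Measure.pi fun _ : Fin n => μP) := by
          refine lintegral_mono_ae ?_
          filter_upwards [hae] with p hp
          have hprob : ∀ u, IsProbabilityMeasure (catMeasure r (fullProb r (p u))) := fun u =>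
            catMeasure_isProb (fullProb_nonneg (hp u)) (fullProb_sum hr _)
          rw [Measure.prod_prod, measure_univ, one_mul]
          exact cond_bound hr p hp hε u ⟨0, hn⟩
      _ = ENNReal.ofReal D + (Measure.pi fun _ : Fin n => μP)
            {p | p u ∈ Metric.closedBall (p ⟨0, hn⟩) (3 * ε)} := by
          rw [lintegral_add_left measurable_const, lintegral_indicator_one]
          · simp
          · simp only [Metric.mem_closedBall]
            exact measurableSet_le (by fun_prop) (by fun_prop)
      _ ≤ ENNReal.ofReal D + ENNReal.ofReal K := by
          gcongr
          exact pi_close_bound μP _ _ hK _ _ hu.symm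
      _ = _ := (ENNReal.ofReal_add hD0 hK0).symm
  refine (measure_mono hsub).trans ((measure_biUnion_finset_le _ _).trans ?_)
  calc _ ≤ ∑ u ∈ (Finset.univ.filter fun u : Fin n => u ≠ ⟨0, hn⟩), ENNReal.ofReal (D + K) :=
        Finset.sum_le_sum fun u hu => hone u (by simpa using hu)
    _ ≤ ∑ u : Fin n, ENNReal.ofReal (D + K) :=
        Finset.sum_le_sum_of_subset (Finset.filter_subset _ _)
    _ = _ := by
        rw [ENNReal.ofReal_mul (by positivity)]
        simp

lemma exp_term_tendsto {a b c : ℝ} (hc : 0 < c) (hb : 0 < b) (M : ℕ → ℕ)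
    (hM : ∀ n : ℕ, c * (n : ℝ) ^ (2 * a + 4 * b) ≤ M n) (C : ℝ) :
    Tendsto (fun n : ℕ => (n : ℝ) * (C * (2 * Real.exp (-2 * M n * ((n : ℝ) ^ (-(a + b))) ^ 2))))
      atTop (nhds 0) := by
  have h1 : Tendsto (fun x : ℝ => x ^ (1 / (2 * b)) * Real.exp (-(2 * c) * x)) atTop (nhds 0) := by
    exact tendsto_rpow_mul_exp_neg_mul_atTop_nhds_zero _ _ (by positivity)
  have h2 : Tendsto (fun n : ℕ => (n : ℝ) ^ (2 * b)) atTop atTop :=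
    (tendsto_rpow_atTop (by positivity)).comp tendsto_natCast_atTop_atTop
  have h3 := (h1.comp h2).const_mul (2 * |C|)
  rw [mul_zero] at h3
  apply squeeze_zero_norm' _ h3
  filter_upwards [eventually_gt_atTop 0] with n hn
  have hn' : (0 : ℝ) < n := by exact_mod_cast hn
  have e1 : ((n : ℝ) ^ (2 * b)) ^ (1 / (2 * b)) = n := by
    rw [← Real.rpow_mul hn'.le]
    rw [mul_one_div_cancel (by positivity), Real.rpow_one]
  have e2 : ((n : ℝ) ^ (-(a + b))) ^ 2 = (n : ℝ) ^ (-(2 * a + 2 * b)) := by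
    rw [← Real.rpow_natCast, ← Real.rpow_mul hn'.le]
    congr 1; push_cast; ring
  have e3 : (n : ℝ) ^ (2 * a + 4 * b) * (n : ℝ) ^ (-(2 * a + 2 * b)) = (n : ℝ) ^ (2 * b) := by
    rw [← Real.rpow_add hn']
    congr 1; ring
  have e4 : c * (n : ℝ) ^ (2 * b) ≤ M n * (n : ℝ) ^ (-(2 * a + 2 * b)) := by
    rw [← e3, ← mul_assoc]
    gcongr
    exact hM n
  simp only [Function.comp_apply, e1, e2]
  rw [norm_mul, norm_mul, Real.norm_eq_abs, Real.norm_eq_abs, Real.norm_eq_abs, abs_of_pos hn',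
    abs_of_pos (by positivity : 0 < 2 * Real.exp (-2 * M n * (n : ℝ) ^ (-(2 * a + 2 * b))))]
  have e5 : Real.exp (-2 * M n * (n : ℝ) ^ (-(2 * a + 2 * b))) ≤
      Real.exp (-(2 * c) * (n : ℝ) ^ (2 * b)) := by
    apply Real.exp_le_exp.2
    nlinarith
  calc _ = 2 * |C| * (n * Real.exp (-2 * M n * (n : ℝ) ^ (-(2 * a + 2 * b)))) := by ring
    _ ≤ _ := by gcongr

/-- **Separation of the other users' empirical frequency vectors from user 1's training
frequency vector, in the `r`-state i.i.d. model.**  With `m n = ⌈c n^{2/(r-1)+α}⌉`,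
`l n = ⌈c' n^{2/(r-1)+α}⌉` and `Δ'_n = n^{-(1/(r-1)+α/4)}`, the empirical frequency
vectors satisfy `P(⋃_{u=2}^n {max_{1 ≤ i ≤ r-1} |X̄_u(i) − W̄_1(i)| ≤ Δ'_n}) → 0` as
`n → ∞`.  (Since `Y_{Π(u)} = X_u` under anonymization, `X̄_u` is the anonymized empirical
frequency vector `Ȳ_{Π(u)}`.) -/
theorem r_state_other_users_freq_far
    (r : ℕ) (hr : 2 ≤ r)
    (f : (Fin (r - 1) → ℝ) → ℝ) (δ₁ δ₂ : ℝ) (hδ₁ : 0 < δ₁)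
    (μP : Measure (Fin (r - 1) → ℝ)) [IsProbabilityMeasure μP]
    (hμP : μP = volume.withDensity fun x => ENNReal.ofReal (f x))
    (hf0 : ∀ x ∉ simplexRegion (r - 1), f x = 0)
    (hf : ∀ x ∈ simplexRegion (r - 1), δ₁ < f x ∧ f x < δ₂)
    (m l : ℕ → ℕ) (c c' α : ℝ) (hc : 0 < c) (hc' : 0 < c') (hα : 0 < α)
    (hm : ∀ n : ℕ, m n = ⌈c * (n : ℝ) ^ (2 / ((r : ℝ) - 1) + α)⌉₊)
    (hl : ∀ n : ℕ, l n = ⌈c' * (n : ℝ) ^ (2 / ((r : ℝ) - 1) + α)⌉₊)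
    (Ω : ℕ → Type) (mΩ : ∀ n, MeasurableSpace (Ω n))
    (μ : ∀ n, Measure (Ω n)) (hμ : ∀ n, IsProbabilityMeasure (μ n))
    (P : ∀ n, Ω n → Fin n → Fin (r - 1) → ℝ)
    (X : ∀ n, Ω n → Fin n → Fin (m n) → Fin r)
    (W : ∀ n, Ω n → Fin n → Fin (l n) → Fin r)
    (hP : ∀ n, Measurable (P n)) (hX : ∀ n, Measurable (X n))
    (hW : ∀ n, Measurable (W n))
    (hlaw : ∀ n, Measure.map (fun ω => (P n ω, X n ω, W n ω)) (μ n) =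
      rStateLaw n (m n) (l n) r μP) :
    Tendsto (fun n =>
        (μ n {ω | ∃ (hn : 0 < n) (u : Fin n), u ≠ ⟨0, hn⟩ ∧
            ∀ i : Fin r, (i : ℕ) ≠ 0 →
              |empFreq (X n ω u) i - empFreq (W n ω ⟨0, hn⟩) i| ≤
                (n : ℝ) ^ (-(1 / ((r : ℝ) - 1) + α / 4))}).toReal)
      atTop (nhds 0) := by
  have hd : (0 : ℝ) < (r : ℝ) - 1 := by
    have : (2 : ℝ) ≤ r := by exact_mod_cast hr
    linarith
  have hcast : ((r - 1 : ℕ) : ℝ) = (r : ℝ) - 1 := by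
    rw [Nat.cast_sub (by omega)]; simp
  set a : ℝ := 1 / ((r : ℝ) - 1) with ha
  have hexp : 2 / ((r : ℝ) - 1) + α = 2 * a + 4 * (α / 4) := by rw [ha]; ring
  have hsm : MeasurableSet (simplexRegion (r - 1)) := by
    have : simplexRegion (r - 1) = (⋂ i, {x : Fin (r - 1) → ℝ | 0 < x i}) ∩
        {x | ∑ i, x i < 1} := by
      ext x; simp [simplexRegion]
    rw [this]
    refine (MeasurableSet.iInter fun i => measurableSet_lt (by fun_prop) (by fun_prop)).inter
      (measurableSet_lt (by fun_prop) (by fun_prop))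
  have hsupp : ∀ᵐ x ∂μP, x ∈ simplexRegion (r - 1) := by
    rw [ae_iff]
    change μP (simplexRegion (r - 1))ᶜ = 0
    rw [hμP, withDensity_apply _ hsm.compl, setLIntegral_congr_fun (g := fun _ => 0) hsm.compl]
    · simp
    · intro x hx
      simp [hf0 x hx]
  have hball : ∀ ρ : ℝ, 0 ≤ ρ → ∀ x, μP (Metric.closedBall x ρ) ≤
      ENNReal.ofReal (|δ₂| * (2 * ρ) ^ (r - 1)) := by
    intro ρ hρ x
    rw [hμP, withDensity_apply _ Metric.isClosed_closedBall.measurableSet]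
    calc _ ≤ ∫⁻ _ in Metric.closedBall x ρ, ENNReal.ofReal |δ₂| := by
          refine lintegral_mono fun y => ENNReal.ofReal_le_ofReal ?_
          by_cases hy : y ∈ simplexRegion (r - 1)
          · exact (hf y hy).2.le.trans (le_abs_self _)
          · rw [hf0 y hy]; positivity
      _ = _ := by
          rw [setLIntegral_const, Real.volume_pi_closedBall _ hρ, Fintype.card_fin,
            ENNReal.ofReal_mul (abs_nonneg _)]
  set Bd : ℕ → ℝ := fun n =>
    (n : ℝ) * (r * (2 * Real.exp (-2 * m n * ((n : ℝ) ^ (-(a + α / 4))) ^ 2)) +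
      r * (2 * Real.exp (-2 * l n * ((n : ℝ) ^ (-(a + α / 4))) ^ 2)) +
      |δ₂| * (2 * (3 * (n : ℝ) ^ (-(a + α / 4)))) ^ (r - 1)) with hBd
  have hmain : ∀ᶠ n : ℕ in atTop, (μ n {ω | ∃ (hn : 0 < n) (u : Fin n), u ≠ ⟨0, hn⟩ ∧
            ∀ i : Fin r, (i : ℕ) ≠ 0 →
              |empFreq (X n ω u) i - empFreq (W n ω ⟨0, hn⟩) i| ≤
                (n : ℝ) ^ (-(a + α / 4))}).toReal ≤ Bd n := by
    filter_upwards [eventually_gt_atTop 0] with n hn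
    have hn' : (0 : ℝ) < n := by exact_mod_cast hn
    have hε : 0 < (n : ℝ) ^ (-(a + α / 4)) := by positivity
    have h := law_bound (m := m n) (l := l n) hr hn μP hsupp hε _
      (hball _ (by positivity)) (by positivity)
    rw [← hlaw n] at h
    refine ENNReal.toReal_le_of_le_ofReal (by positivity) (le_trans ?_ h)
    refine le_trans (measure_mono ?_)
      (Measure.le_map_apply ((hP n).prodMk ((hX n).prodMk (hW n))).aemeasurable _)
    rintro ω ⟨_, u, hu, h⟩
    exact ⟨u, hu, h⟩
  refine squeeze_zero' (Eventually.of_forall fun n => ENNReal.toReal_nonneg) hmain ?_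
  have t1 := exp_term_tendsto (a := a) (b := α / 4) hc (by positivity) m
    (fun n => by rw [hm n, hexp]; exact Nat.le_ceil _) (r : ℝ)
  have t2 := exp_term_tendsto (a := a) (b := α / 4) hc' (by positivity) l
    (fun n => by rw [hl n, hexp]; exact Nat.le_ceil _) (r : ℝ)
  have t3 : Tendsto (fun n : ℕ => (n : ℝ) * (|δ₂| *
      (2 * (3 * (n : ℝ) ^ (-(a + α / 4)))) ^ (r - 1))) atTop (nhds 0) := by
    have hb : 0 < ((r : ℝ) - 1) * (α / 4) := by positivity
    have h := ((tendsto_rpow_neg_atTop hb).comp tendsto_natCast_atTop_atTop).const_mul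
      (|δ₂| * 6 ^ (r - 1))
    rw [mul_zero] at h
    refine h.congr' ?_
    filter_upwards [eventually_gt_atTop 0] with n hn
    have hn' : (0 : ℝ) < n := by exact_mod_cast hn
    have e : (n : ℝ) * ((n : ℝ) ^ (-(a + α / 4))) ^ (r - 1) =
        (n : ℝ) ^ (-(((r : ℝ) - 1) * (α / 4))) := by
      rw [← Real.rpow_natCast, ← Real.rpow_mul hn'.le, hcast]
      nth_rewrite 1 [← Real.rpow_one (n : ℝ)]
      rw [← Real.rpow_add hn']
      congr 1
      rw [ha]; field_simp; ring
    simp only [Function.comp_apply]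
    rw [← e, ← mul_assoc 2 3, mul_pow]
    norm_num
    ring
  have := (t1.add t2).add t3
  simp only [add_zero] at this
  refine this.congr fun n => ?_
  rw [hBd]
  ring
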